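/- arXiv:1912.01283 — 2 statements merged into one kernel-verified Lean document; each statement's English description precedes it below -/
import Mathlib

section
/- Let Ω ⊂ ℝ^N (N ≥ 3) be a bounded open set with C² boundary, a ≥ 2, Φ : Ω → (0,∞) Borel measurable, and G : {(x,y) ∈ Ω × Ω : x ≠ y} → (0,∞) Borel measurable. Assume there exist c₀ ≥ 1 and β₁ > 0 such that for every β ∈ (0,β₁), every x ∈ Σ_β and every y ∈ Ω with 0 < |x−y| < aβ: c₀⁻¹ |x−y|^{2−N} Φ(y) ≤ Φ(x) G(x,y) ≤ c₀ |x−y|^{2−N} Φ(y). Then there exist c ≥ 1 and β₂ ∈ (0,β₁] such that for every positive Borel measure τ on Ω with ∫_Ω Φ dτ < ∞ and every β ∈ (0,β₂), setting I₁(β) := β⁻¹ ∫_{Σ_β} Φ(x) (∫_Ω G(x,y) 𝟙_{|x−y| < aβ} dτ(y)) dH^{N−1}(x), one has c⁻¹ ∫_{Ω_{aβ/2}} Φ dτ ≤ I₁(β) ≤ c ∫_Ω Φ dτ. -/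
open MeasureTheory Metric Set

/-- `Ω` has `C²` boundary: near each boundary point, `Ω` coincides with the strict
sublevel set of a `C²` function with nonvanishing derivative. -/
def HasC2Boundary {N : ℕ} (Ω : Set (EuclideanSpace ℝ (Fin N))) : Prop :=
  ∀ p ∈ frontier Ω, ∃ (U : Set (EuclideanSpace ℝ (Fin N)))
    (f : EuclideanSpace ℝ (Fin N) → ℝ),
    IsOpen U ∧ p ∈ U ∧ ContDiffOn ℝ 2 f U ∧ (∀ x ∈ U, fderiv ℝ f x ≠ 0) ∧
    Ω ∩ U = {x ∈ U | f x < 0}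

open scoped InnerProductSpace

theorem infDist_frontier_pos {X : Type*} [PseudoMetricSpace X] {Ω : Set X} (hΩ : IsOpen Ω)
    (hne : (frontier Ω).Nonempty) {x : X} (hx : x ∈ Ω) : 0 < infDist x (frontier Ω) := by
  rw [← isClosed_frontier.notMem_iff_infDist_pos hne, hΩ.frontier_eq]
  exact fun h => h.2 hx

theorem le_infDist_frontier_of_ball_subset {X : Type*} [PseudoMetricSpace X] {Ω : Set X}
    (hΩ : IsOpen Ω) (hne : (frontier Ω).Nonempty) {x : X} {r : ℝ} (h : ball x r ⊆ Ω) :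
    r ≤ infDist x (frontier Ω) := by
  refine (le_infDist hne).2 fun y hy => ?_
  by_contra! hlt
  rw [hΩ.frontier_eq] at hy
  exact hy.2 (h (by rwa [mem_ball, dist_comm]))

section Geometry

variable {E : Type*} [NormedAddCommGroup E] [InnerProductSpace ℝ E]

/-- In the ball `B(p, ρ)`, translating a point of `Ω` by a short nonzero vector that makes a
definite acute angle with `e` keeps it in `Ω`. -/
def InteriorConeAt (Ω : Set E) (p e : E) (ρ : ℝ) : Prop :=
  ∀ z ∈ Ω, dist z p < ρ → ∀ v : E, v ≠ 0 → ‖v‖ < ρ → ‖v‖ / 7 ≤ ⟪e, v⟫_ℝ → z + v ∈ Ω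

theorem ball_infDist_frontier_subset {Ω : Set E} (hΩ : IsOpen Ω) {x : E} (hx : x ∈ Ω) :
    ball x (infDist x (frontier Ω)) ⊆ Ω := by
  by_cases hpos : 0 < infDist x (frontier Ω)
  · refine (convex_ball x _).isPreconnected.subset_of_closure_inter_subset hΩ
      ⟨x, mem_ball_self hpos, hx⟩ ?_
    rintro z ⟨hzc, hzb⟩
    by_contra hz
    have hzf : z ∈ frontier Ω := by
      rw [hΩ.frontier_eq]
      exact ⟨hzc, hz⟩
    have := infDist_le_dist_of_mem (x := x) hzf
    rw [mem_ball, dist_comm] at hzb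
    linarith
  · rw [ball_eq_empty.2 (not_lt.1 hpos)]
    exact empty_subset _

/-- The distance to the frontier grows at a definite rate along directions close to the axis of
an interior cone. -/
theorem InteriorConeAt.infDist_add_le {Ω : Set E} {p e : E} {ρ : ℝ} (h : InteriorConeAt Ω p e ρ)
    (hΩ : IsOpen Ω) (hp : p ∈ frontier Ω) (he : ‖e‖ = 1) {x v : E} {κ : ℝ} (hκ : 1 / 4 < κ)
    (hκ1 : κ ≤ 1) (hx : x ∈ Ω) (hxp : dist x p < ρ / 2) (hv0 : v ≠ 0) (hv : ‖v‖ < ρ / 2)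
    (hve : κ * ‖v‖ ≤ ⟪e, v⟫_ℝ) :
    x + v ∈ Ω ∧
      infDist x (frontier Ω) + (κ - 1 / 4) * ‖v‖ ≤ infDist (x + v) (frontier Ω) := by
  have hδ := infDist_frontier_pos hΩ ⟨p, hp⟩ hx
  have hδp := infDist_le_dist_of_mem (x := x) hp
  have hvpos : 0 < ‖v‖ := norm_pos_iff.2 hv0
  set d := infDist x (frontier Ω) with hd
  set s := (κ - 1 / 4) * ‖v‖ with hs
  have hspos : 0 < s := mul_pos (by linarith) hvpos
  have hball : ball (x + v) (d + s) ⊆ Ω := by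
    intro q hq
    set w := q - (x + v) with hw
    have hwn : ‖w‖ < d + s := by rwa [mem_ball, dist_eq_norm] at hq
    have hq' : q = (x + (d / (d + s)) • w) + (v + (s / (d + s)) • w) := by
      have : (d / (d + s)) • w + (s / (d + s)) • w = w := by
        rw [← add_smul, ← add_div, div_self (by positivity), one_smul]
      calc q = x + v + w := by rw [hw]; abel
        _ = x + v + ((d / (d + s)) • w + (s / (d + s)) • w) := by rw [this]
        _ = _ := by abel
    have hscale : ∀ t, 0 < t → ‖(t / (d + s)) • w‖ < t := fun t ht => by
      rw [norm_smul, Real.norm_of_nonneg (by positivity), div_mul_eq_mul_div,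
        div_lt_iff₀ (by positivity)]
      exact mul_lt_mul_of_pos_left hwn ht
    have h1 := hscale d hδ
    have h2 := hscale s hspos
    set w₁ := (d / (d + s)) • w
    set w₂ := (s / (d + s)) • w
    have hz : x + w₁ ∈ Ω := ball_infDist_frontier_subset hΩ hx (by simpa [dist_eq_norm] using h1)
    have hinner : ‖v‖ / 4 ≤ ⟪e, v + w₂⟫_ℝ := by
      have : |⟪e, w₂⟫_ℝ| ≤ ‖w₂‖ := by simpa [he] using abs_real_inner_le_norm e w₂
      have := (abs_le.1 this).1
      rw [inner_add_right]
      linarith [hs]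
    have hnorm : ‖v + w₂‖ < 7 / 4 * ‖v‖ := by
      have : s ≤ 3 / 4 * ‖v‖ := mul_le_mul_of_nonneg_right (by linarith) hvpos.le
      linarith [norm_add_le v w₂]
    rw [hq']
    refine h _ hz ?_ _ ?_ ?_ (by linarith)
    · calc dist (x + w₁) p ≤ dist (x + w₁) x + dist x p := dist_triangle _ _ _
        _ = ‖w₁‖ + dist x p := by simp [dist_eq_norm]
        _ < ρ := by linarith
    · rintro h0
      rw [h0, inner_zero_right] at hinner
      linarith
    · have : s ≤ ‖v‖ := by
        calc s ≤ 1 * ‖v‖ := mul_le_mul_of_nonneg_right (by linarith) hvpos.le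
          _ = ‖v‖ := one_mul _
      linarith [norm_add_le v w₂]
  exact ⟨hball (mem_ball_self (by positivity)), le_infDist_frontier_of_ball_subset hΩ ⟨p, hp⟩ hball⟩

/-- A level set of the distance to the frontier makes an angle bounded below with the axis of an
interior cone. -/
theorem InteriorConeAt.abs_inner_sub_le {Ω : Set E} {p e : E} {ρ : ℝ} (h : InteriorConeAt Ω p e ρ)
    (hΩ : IsOpen Ω) (hp : p ∈ frontier Ω) (he : ‖e‖ = 1) {x y : E} (hx : x ∈ Ω) (hy : y ∈ Ω)
    (hxp : dist x p < ρ / 4) (hyp : dist y p < ρ / 4)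
    (hxy : infDist x (frontier Ω) = infDist y (frontier Ω)) :
    |⟪e, x - y⟫_ℝ| ≤ 1 / 2 * ‖x - y‖ := by
  have key : ∀ x y : E, y ∈ Ω → dist x p < ρ / 4 → dist y p < ρ / 4 →
      infDist x (frontier Ω) = infDist y (frontier Ω) → ⟪e, x - y⟫_ℝ ≤ 1 / 2 * ‖x - y‖ := by
    intro x y hy hxp hyp hxy
    by_contra! hlt
    have hne : x - y ≠ 0 := by
      rintro h0
      simp [h0] at hlt
    have hpos := norm_pos_iff.2 hne
    have hd : ‖x - y‖ < ρ / 2 := by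
      rw [← dist_eq_norm]
      linarith [dist_triangle_right x y p]
    have := (h.infDist_add_le hΩ hp he (κ := 1 / 2) (by norm_num) (by norm_num) hy
      (by linarith [dist_nonneg (x := y) (y := p)]) hne hd hlt.le).2
    rw [add_sub_cancel, hxy] at this
    linarith
  refine abs_le.2 ⟨?_, key x y hy hxp hyp hxy⟩
  have := key y x hx hyp hxp hxy.symm
  rw [← neg_sub x y, inner_neg_right, norm_neg] at this
  linarith

/-- Near the vertex of an interior cone, the level set `{δ = β}` is reached from every point `y`
with `δ(y) < aβ/2` within a distance leaving room in the ball `B(y, aβ)`. -/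
theorem InteriorConeAt.exists_infDist_eq [ProperSpace E] {Ω : Set E} {p e : E} {ρ : ℝ}
    (h : InteriorConeAt Ω p e ρ) (hΩ : IsOpen Ω) (hp : p ∈ frontier Ω) (he : ‖e‖ = 1)
    {y : E} {a β : ℝ} (ha : 2 ≤ a) (hβ : 0 < β) (hβρ : 4 * β < ρ) (hy : y ∈ Ω)
    (hyp : dist y p < ρ / 2) (hya : infDist y (frontier Ω) < a * β / 2) :
    ∃ x ∈ Ω, infDist x (frontier Ω) = β ∧ dist x y ≤ (a - 2 / 3) * β := by
  have haβ : 2 * β ≤ a * β := mul_le_mul_of_nonneg_right ha hβ.le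
  have hδ := infDist_frontier_pos hΩ ⟨p, hp⟩ hy
  rcases le_or_gt β (infDist y (frontier Ω)) with hle | hlt
  · obtain ⟨q, hq, hqy⟩ := isClosed_frontier.exists_infDist_eq_dist ⟨p, hp⟩ y
    set d := infDist y (frontier Ω) with hd
    set x := q + (β / d) • (y - q) with hx
    have hxq : dist x q = β := by
      rw [hx, dist_eq_norm, add_sub_cancel_left, norm_smul, Real.norm_of_nonneg (by positivity),
        ← dist_eq_norm, ← hqy, div_mul_cancel₀ _ hδ.ne']
    have hxy : dist x y = d - β := by
      have : x - y = (β / d - 1) • (y - q) := by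
        rw [hx, sub_smul, one_smul]; abel
      rw [dist_eq_norm, this, norm_smul, ← dist_eq_norm y q, ← hqy, Real.norm_eq_abs,
        abs_of_nonpos (sub_nonpos.2 ((div_le_one hδ).2 hle)), neg_sub, sub_mul, one_mul,
        div_mul_cancel₀ _ hδ.ne']
    refine ⟨x, ball_infDist_frontier_subset hΩ hy ?_, le_antisymm ?_ ?_, ?_⟩
    · rw [mem_ball, hxy]; linarith
    · exact hxq ▸ infDist_le_dist_of_mem hq
    · have := infDist_le_infDist_add_dist (s := frontier Ω) (x := y) (y := x)
      rw [dist_comm, hxy] at this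
      linarith
    · rw [hxy]; linarith
  · have hmono : ∀ t, 0 < t → t ≤ 4 / 3 * β → y + t • e ∈ Ω ∧
        infDist y (frontier Ω) + 3 / 4 * t ≤ infDist (y + t • e) (frontier Ω) := by
      intro t ht htβ
      have hn : ‖t • e‖ = t := by rw [norm_smul, he, mul_one, Real.norm_of_nonneg ht.le]
      have := h.infDist_add_le hΩ hp he (κ := 1) (by norm_num) le_rfl hy hyp (v := t • e)
        (by rw [← norm_pos_iff, hn]; exact ht) (by rw [hn]; linarith)
        (by rw [hn, inner_smul_right, real_inner_self_eq_norm_sq, he]; linarith)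
      rw [hn] at this
      exact ⟨this.1, by linarith [this.2]⟩
    have hcont : Continuous fun t : ℝ => infDist (y + t • e) (frontier Ω) := by
      have := continuous_infDist_pt (frontier Ω)
      fun_prop
    obtain ⟨t, ht, hteq⟩ := intermediate_value_Icc (a := 0) (b := 4 / 3 * β) (by positivity)
      hcont.continuousOn (show β ∈ _ from ⟨by simpa using hlt.le, by
        linarith [(hmono (4 / 3 * β) (by positivity) le_rfl).2]⟩)
    have htpos : 0 < t := by
      refine lt_of_le_of_ne ht.1 ?_
      rintro rfl
      simp only [zero_smul, add_zero] at hteq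
      linarith
    refine ⟨y + t • e, (hmono t htpos ht.2).1, hteq, ?_⟩
    rw [dist_eq_norm, add_sub_cancel_left, norm_smul, he, mul_one, Real.norm_of_nonneg ht.1]
    linarith [ht.2]

/-- Around a point `x` with `δ(x) = β`, every line parallel to the axis and close to `x` meets the
level set `{δ = β}`. -/
theorem InteriorConeAt.exists_add_infDist_eq {Ω : Set E} {p e : E} {ρ : ℝ}
    (h : InteriorConeAt Ω p e ρ) (hΩ : IsOpen Ω) (hp : p ∈ frontier Ω) (he : ‖e‖ = 1)
    {x z : E} {β : ℝ} (hx : x ∈ Ω) (hxβ : infDist x (frontier Ω) = β) (hβρ : 4 * β < ρ)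
    (hxp : dist x p < ρ / 4) (hz : ‖z‖ < β / 4) (hze : ⟪e, z⟫_ℝ = 0) :
    ∃ t : ℝ, x + (z + t • e) ∈ Ω ∧ infDist (x + (z + t • e)) (frontier Ω) = β ∧
      ‖z + t • e‖ < β / 2 := by
  have hnorm : ∀ t : ℝ, |t| ≤ ‖z‖ → ‖z + t • e‖ ≤ 2 * ‖z‖ := fun t ht => by
    have := norm_add_le z (t • e)
    rw [norm_smul, he, mul_one, Real.norm_eq_abs] at this
    linarith
  have hmem : ∀ t : ℝ, |t| ≤ ‖z‖ → x + (z + t • e) ∈ Ω := fun t ht => by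
    refine ball_infDist_frontier_subset hΩ hx ?_
    rw [mem_ball, dist_eq_norm, add_sub_cancel_left, hxβ]
    linarith [hnorm t ht, norm_nonneg z]
  rcases eq_or_ne z 0 with rfl | hz0
  · exact ⟨0, by simpa using hx, by simpa using hxβ, by
      rw [norm_zero] at hz; simp; linarith⟩
  have hzpos := norm_pos_iff.2 hz0
  have hee : ⟪e, e⟫_ℝ = 1 := by rw [real_inner_self_eq_norm_sq, he, one_pow]
  have hρ : 0 < ρ := by linarith
  have hcont : Continuous fun t : ℝ => infDist (x + (z + t • e)) (frontier Ω) := by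
    have := continuous_infDist_pt (frontier Ω)
    fun_prop
  have hne : ∀ t : ℝ, z + t • e ≠ 0 := by
    intro t h0
    have h1 := congrArg (fun u => ⟪e, u⟫_ℝ) h0
    simp only [inner_add_right, hze, inner_smul_right, hee, inner_zero_right, zero_add,
      mul_one] at h1
    rw [h1, zero_smul, add_zero] at h0
    exact hz0 h0
  have hup : β ≤ infDist (x + (z + ‖z‖ • e)) (frontier Ω) := by
    have hn := hnorm ‖z‖ (by simp)
    have := (h.infDist_add_le hΩ hp he (κ := 1 / 2) (by norm_num) (by norm_num) hx
      (by linarith) (hne ‖z‖) (by linarith) (by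
        rw [inner_add_right, hze, inner_smul_right, hee]; linarith)).2
    rw [hxβ] at this
    linarith [norm_nonneg (z + ‖z‖ • e)]
  have hlow : infDist (x + (z + (-‖z‖) • e)) (frontier Ω) ≤ β := by
    have hn := hnorm (-‖z‖) (by simp)
    have hneg : ‖-(z + (-‖z‖) • e)‖ = ‖z + (-‖z‖) • e‖ := norm_neg _
    have := (h.infDist_add_le hΩ hp he (κ := 1 / 2) (by norm_num) (by norm_num)
      (hmem (-‖z‖) (by simp)) (v := -(z + (-‖z‖) • e)) (by
        have : dist (x + (z + (-‖z‖) • e)) p ≤ ‖z + (-‖z‖) • e‖ + dist x p := by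
          simpa [dist_eq_norm] using dist_triangle (x + (z + (-‖z‖) • e)) x p
        linarith) (neg_ne_zero.2 (hne _)) (by linarith) (by
        rw [inner_neg_right, inner_add_right, hze, inner_smul_right, hee]; linarith)).2
    rw [add_neg_cancel_right, hxβ] at this
    linarith [norm_nonneg (-(z + (-‖z‖) • e))]
  obtain ⟨t, ht, hteq⟩ := intermediate_value_Icc (a := -‖z‖) (b := ‖z‖) (by linarith)
    hcont.continuousOn (show β ∈ _ from ⟨hlow, hup⟩)
  exact ⟨t, hmem t (abs_le.2 ht), hteq, by linarith [hnorm t (abs_le.2 ht)]⟩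

end Geometry

theorem HasC2Boundary.exists_interiorConeAt {N : ℕ} {Ω : Set (EuclideanSpace ℝ (Fin N))}
    (h : HasC2Boundary Ω) {p : EuclideanSpace ℝ (Fin N)} (hp : p ∈ frontier Ω) :
    ∃ e, ‖e‖ = 1 ∧ ∃ ρ > 0, InteriorConeAt Ω p e ρ := by
  obtain ⟨U, f, hU, hpU, hf, hf', hΩU⟩ := h p hp
  have hUn := hU.mem_nhds hpU
  have hstrict := (hf.contDiffAt hUn).hasStrictFDerivAt two_ne_zero
  set g := (InnerProductSpace.toDual ℝ _).symm (fderiv ℝ f p) with hg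
  have hgapp : ∀ v, fderiv ℝ f p v = ⟪g, v⟫_ℝ := fun v => by
    rw [hg, InnerProductSpace.toDual_symm_apply]
  have hgpos : 0 < ‖g‖ := by
    rw [hg, LinearIsometryEquiv.norm_map]
    exact norm_pos_iff.2 (hf' p hpU)
  have hev := hstrict.isLittleO.def (c := ‖g‖ / 14) (by positivity)
  obtain ⟨ρ₁, hρ₁, hball₁⟩ := Metric.eventually_nhds_iff_ball.1 hev
  obtain ⟨ρ₂, hρ₂, hball₂⟩ := Metric.mem_nhds_iff.1 hUn
  refine ⟨-(‖g‖⁻¹ • g), ?_, min ρ₁ ρ₂ / 2, by positivity, ?_⟩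
  · rw [norm_neg, norm_smul, norm_inv, norm_norm, inv_mul_cancel₀ hgpos.ne']
  intro z hz hzp v hv0 hv hve
  have hvpos := norm_pos_iff.2 hv0
  have hmin1 := min_le_left ρ₁ ρ₂
  have hmin2 := min_le_right ρ₁ ρ₂
  have hzv : dist (z + v) p < min ρ₁ ρ₂ := by
    have : dist (z + v) p ≤ ‖v‖ + dist z p := by
      simpa [dist_eq_norm] using dist_triangle (z + v) z p
    linarith
  have hz' : dist z p < min ρ₁ ρ₂ := by linarith [dist_nonneg (x := z) (y := p)]
  have hb := hball₁ (z + v, z) (by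
    rw [mem_ball, Prod.dist_eq]
    exact max_lt (by linarith) (by linarith))
  simp only [add_sub_cancel_left, hgapp] at hb
  have hfz : f z < 0 := by
    have : z ∈ Ω ∩ U := ⟨hz, hball₂ (by rw [mem_ball]; linarith)⟩
    rw [hΩU] at this
    exact this.2
  have hgv : ⟪g, v⟫_ℝ ≤ -(‖g‖ * (‖v‖ / 7)) := by
    rw [inner_neg_left, real_inner_smul_left] at hve
    have := mul_le_mul_of_nonneg_left hve hgpos.le
    rw [mul_neg, mul_inv_cancel_left₀ hgpos.ne'] at this
    linarith
  have : f (z + v) < 0 := by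
    have := (abs_le.1 (Real.norm_eq_abs _ ▸ hb)).2
    have : 0 < ‖g‖ * ‖v‖ := by positivity
    linarith
  have hmem : z + v ∈ Ω ∩ U := by
    rw [hΩU]
    exact ⟨hball₂ (by rw [mem_ball]; linarith), this⟩
  exact hmem.1

section Measure

variable {N : ℕ}

theorem finrank_orthogonal_span_singleton_eq {e : EuclideanSpace ℝ (Fin N)} (he : ‖e‖ = 1) :
    (Module.finrank ℝ (ℝ ∙ e)ᗮ : ℝ) = (N : ℝ) - 1 ∧ Module.finrank ℝ (ℝ ∙ e)ᗮ = N - 1 := by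
  have h1 := (ℝ ∙ e).finrank_add_finrank_orthogonal
  rw [finrank_span_singleton (norm_pos_iff.1 (by rw [he]; exact one_pos)),
    finrank_euclideanSpace_fin] at h1
  refine ⟨?_, by omega⟩
  have : (1 : ℝ) + Module.finrank ℝ (ℝ ∙ e)ᗮ = N := by exact_mod_cast h1
  linarith

/-- The Hausdorff measure of a ball of the hyperplane orthogonal to a unit vector. -/
theorem exists_hausdorffMeasure_ball_orthogonal {e : EuclideanSpace ℝ (Fin N)} (he : ‖e‖ = 1) :
    ∃ m : NNReal, 0 < m ∧ ∀ (y : (ℝ ∙ e)ᗮ) (r : ℝ), 0 < r →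
      μH[(N : ℝ) - 1] (ball y r) = m * ENNReal.ofReal (r ^ (N - 1)) := by
  obtain ⟨h1, h2⟩ := finrank_orthogonal_span_singleton_eq he
  have hlt : μH[(Module.finrank ℝ (ℝ ∙ e)ᗮ : ℝ)] (ball (0 : (ℝ ∙ e)ᗮ) 1) < ⊤ := measure_ball_lt_top
  have hpos : 0 < μH[(Module.finrank ℝ (ℝ ∙ e)ᗮ : ℝ)] (ball (0 : (ℝ ∙ e)ᗮ) 1) :=
    measure_ball_pos _ _ one_pos
  refine ⟨_, ENNReal.toNNReal_pos hpos.ne' hlt.ne, fun y r hr => ?_⟩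
  rw [ENNReal.coe_toNNReal hlt.ne, ← h1, Measure.addHaar_ball_of_pos _ _ hr, h2, mul_comm]

/-- A set whose chords are transversal to `e` has at most `(N-1)`-dimensional growth. -/
theorem exists_hausdorffMeasure_inter_ball_le (hN : 1 ≤ N) {e : EuclideanSpace ℝ (Fin N)}
    (he : ‖e‖ = 1) :
    ∃ C : NNReal, ∀ S : Set (EuclideanSpace ℝ (Fin N)),
      (∀ x ∈ S, ∀ y ∈ S, |⟪e, x - y⟫_ℝ| ≤ 1 / 2 * ‖x - y‖) → ∀ (y : EuclideanSpace ℝ (Fin N))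
      (r : ℝ), 0 < r → μH[(N : ℝ) - 1] (S ∩ ball y r) ≤ C * ENNReal.ofReal (r ^ (N - 1)) := by
  obtain ⟨m, -, hm⟩ := exists_hausdorffMeasure_ball_orthogonal he
  have hd : (0 : ℝ) ≤ (N : ℝ) - 1 := by
    have : (1 : ℝ) ≤ N := by exact_mod_cast hN
    linarith
  refine ⟨2 ^ ((N : ℝ) - 1) * m, fun S hS y r hr => ?_⟩
  set P := (ℝ ∙ e)ᗮ.orthogonalProjectionOnto with hP
  set T := S ∩ ball y r with hT
  have hanti : AntilipschitzWith 2 (T.domRestrict P) := by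
    refine AntilipschitzWith.of_le_mul_dist ?_
    rintro ⟨x, hx⟩ ⟨z, hz⟩
    have h1 := hS x hx.1 z hz.1
    have h2 := (ℝ ∙ e).norm_sq_eq_add_norm_sq_starProjection (x - z)
    rw [Submodule.starProjection_unit_singleton ℝ he, norm_smul, he, mul_one,
      Real.norm_eq_abs] at h2
    have h3 : dist (T.domRestrict P ⟨x, hx⟩) (T.domRestrict P ⟨z, hz⟩) =
        ‖(ℝ ∙ e)ᗮ.starProjection (x - z)‖ := by
      rw [dist_eq_norm, Set.domRestrict_apply, Set.domRestrict_apply, ← map_sub]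
      rfl
    rw [h3, Subtype.dist_eq, dist_eq_norm]
    refine abs_le_of_sq_le_sq' ?_ (by positivity) |>.2
    have h4 : |⟪e, x - z⟫_ℝ| ^ 2 ≤ (1 / 2 * ‖x - z‖) ^ 2 := by gcongr
    simp only [NNReal.coe_ofNat]
    nlinarith [sq_nonneg ‖x - z‖]
  have hsub : μH[(N : ℝ) - 1] T = μH[(N : ℝ) - 1] (univ : Set T) := by
    rw [← (isometry_subtype_coe (s := T)).hausdorffMeasure_image (Or.inl hd), image_univ,
      Subtype.range_coe]
  rw [hsub]
  refine (hanti.le_hausdorffMeasure_image hd univ).trans ?_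
  rw [ENNReal.coe_mul, mul_assoc, ← hm (P y) r hr, ENNReal.coe_rpow_of_nonneg _ hd]
  gcongr
  rintro _ ⟨⟨x, hx⟩, -, rfl⟩
  rw [mem_ball]
  refine lt_of_le_of_lt ?_ (mem_ball.1 hx.2)
  simpa using (Submodule.lipschitzWith_orthogonalProjectionOnto (ℝ ∙ e)ᗮ).dist_le_mul x y

/-- A set that meets every line parallel to `e` near `x` has at least the measure of a disc. -/
theorem exists_le_hausdorffMeasure (hN : 1 ≤ N) {e : EuclideanSpace ℝ (Fin N)} (he : ‖e‖ = 1) :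
    ∃ c : NNReal, 0 < c ∧ ∀ (S : Set (EuclideanSpace ℝ (Fin N))) (x : EuclideanSpace ℝ (Fin N))
      (r : ℝ), 0 < r → (∀ z, ‖z‖ < r → ⟪e, z⟫_ℝ = 0 → ∃ t : ℝ, x + (z + t • e) ∈ S) →
      c * ENNReal.ofReal (r ^ (N - 1)) ≤ μH[(N : ℝ) - 1] S := by
  obtain ⟨m, hmpos, hm⟩ := exists_hausdorffMeasure_ball_orthogonal he
  have hd : (0 : ℝ) ≤ (N : ℝ) - 1 := by
    have : (1 : ℝ) ≤ N := by exact_mod_cast hN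
    linarith
  refine ⟨m, hmpos, fun S x r hr hS => ?_⟩
  set P := (ℝ ∙ e)ᗮ.orthogonalProjectionOnto with hP
  have hPe : P e = 0 := Submodule.orthogonalProjectionOnto_orthogonalComplement_singleton_eq_zero e
  have hsub : ball (P x) r ⊆ P '' S := by
    intro w hw
    rw [mem_ball, dist_eq_norm] at hw
    obtain ⟨t, ht⟩ := hS (w - P x : (ℝ ∙ e)ᗮ) hw
      (Submodule.mem_orthogonal_singleton_iff_inner_right.1 (w - P x).2)
    refine ⟨_, ht, ?_⟩
    rw [map_add, map_add, map_smul, hPe, smul_zero, add_zero,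
      Submodule.orthogonalProjectionOnto_mem_subspace_eq_self, add_sub_cancel]
  have := (Submodule.lipschitzWith_orthogonalProjectionOnto (ℝ ∙ e)ᗮ).hausdorffMeasure_image_le hd S
  rw [ENNReal.coe_one, ENNReal.one_rpow, one_mul] at this
  rw [← hm (P x) r hr]
  exact (measure_mono hsub).trans this

/-- A measure with `(N-1)`-dimensional growth integrates `|x-y|^{2-N}` over `B(y,R)` to `O(R)`. -/
theorem lintegral_ball_dist_rpow_le {X : Type*} [MetricSpace X] [MeasurableSpace X] [BorelSpace X]
    (hN : 3 ≤ N) {μ : Measure X} {C : ENNReal} {y : X}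
    (hμ : ∀ r : ℝ, 0 < r → μ (ball y r) ≤ C * ENNReal.ofReal (r ^ (N - 1))) {R : ℝ} (hR : 0 < R) :
    ∫⁻ x in ball y R, ENNReal.ofReal (dist x y ^ ((2 : ℝ) - N)) ∂μ ≤
      C * ENNReal.ofReal (4 ^ (N - 1) * R) := by
  have hN' : (3 : ℝ) ≤ N := by exact_mod_cast hN
  set s : ℕ → ℝ := fun k => R / 2 / 2 ^ k with hs
  have hspos : ∀ k, 0 < s k := fun k => by positivity
  have hpt : ∀ x ∈ ball y R, ENNReal.ofReal (dist x y ^ ((2 : ℝ) - N)) ≤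
      ∑' k, (ball y (4 * s k)).indicator (fun _ => ENNReal.ofReal (s k ^ ((2 : ℝ) - N))) x := by
    intro x hx
    rw [mem_ball] at hx
    rcases (dist_nonneg (x := x) (y := y)).eq_or_lt with h0 | hpos
    · rw [← h0, Real.zero_rpow (by linarith), ENNReal.ofReal_zero]
      exact zero_le
    obtain ⟨k, hk1, hk2⟩ := exists_nat_pow_near_of_lt_one (x := dist x y / R) (y := 1 / 2)
      (by positivity) ((div_le_one hR).2 hx.le) (by norm_num) (by norm_num)
    have hsk : s k = R * (1 / 2) ^ (k + 1) := by
      simp only [hs, pow_succ, one_div, inv_pow]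
      field_simp
    have hk1' : s k ≤ dist x y := by
      rw [lt_div_iff₀ hR] at hk1
      rw [hsk]; linarith
    have hk2' : dist x y < 4 * s k := by
      rw [div_le_iff₀ hR] at hk2
      have : 0 < R * (1 / 2 : ℝ) ^ k := by positivity
      rw [hsk, pow_succ]; linarith
    refine le_trans ?_ (ENNReal.le_tsum k)
    rw [indicator_of_mem (by rwa [mem_ball])]
    exact ENNReal.ofReal_le_ofReal
      (Real.rpow_le_rpow_of_nonpos (hspos k) hk1' (by linarith))
  have hterm : ∀ k, ENNReal.ofReal (s k ^ ((2 : ℝ) - N)) * μ (ball y (4 * s k)) ≤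
      C * ENNReal.ofReal (4 ^ (N - 1)) * ENNReal.ofReal (s k) := by
    intro k
    have hpow : s k ^ ((2 : ℝ) - N) * (4 * s k) ^ (N - 1) = 4 ^ (N - 1) * s k := by
      have : s k ^ ((2 : ℝ) - N) * s k ^ (N - 1) = s k := by
        rw [← Real.rpow_natCast, ← Real.rpow_add (hspos k), Nat.cast_sub (by omega)]
        convert Real.rpow_one (s k) using 2
        push_cast; ring
      rw [mul_pow, mul_left_comm, this]
    calc _ ≤ ENNReal.ofReal (s k ^ ((2 : ℝ) - N)) *
          (C * ENNReal.ofReal ((4 * s k) ^ (N - 1))) := by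
          gcongr
          exact hμ _ (by linarith [hspos k])
      _ = C * ENNReal.ofReal (s k ^ ((2 : ℝ) - N) * (4 * s k) ^ (N - 1)) := by
          rw [ENNReal.ofReal_mul (Real.rpow_nonneg (hspos k).le _)]; ring
      _ = _ := by rw [hpow, ENNReal.ofReal_mul (by positivity), mul_assoc]
  calc _ ≤ ∫⁻ x in ball y R, ∑' k, (ball y (4 * s k)).indicator
            (fun _ => ENNReal.ofReal (s k ^ ((2 : ℝ) - N))) x ∂μ :=
        setLIntegral_mono' measurableSet_ball hpt
    _ ≤ ∫⁻ x, ∑' k, (ball y (4 * s k)).indicator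
            (fun _ => ENNReal.ofReal (s k ^ ((2 : ℝ) - N))) x ∂μ := setLIntegral_le_lintegral _ _
    _ = ∑' k, ENNReal.ofReal (s k ^ ((2 : ℝ) - N)) * μ (ball y (4 * s k)) := by
        rw [lintegral_tsum fun k => (measurable_const.indicator measurableSet_ball).aemeasurable]
        simp_rw [lintegral_indicator_const measurableSet_ball]
    _ ≤ ∑' k, C * ENNReal.ofReal (4 ^ (N - 1)) * ENNReal.ofReal (s k) :=
        ENNReal.tsum_le_tsum hterm
    _ = C * ENNReal.ofReal (4 ^ (N - 1) * R) := by
        rw [ENNReal.tsum_mul_left, ← ENNReal.ofReal_tsum_of_nonneg (fun k => (hspos k).le)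
          (summable_geometric_two' R), tsum_geometric_two', ENNReal.ofReal_mul (by positivity),
          mul_assoc]

variable {Ω : Set (EuclideanSpace ℝ (Fin N))}

/-- Level sets of the distance to a `C²` boundary have uniform `(N-1)`-dimensional growth. -/
theorem HasC2Boundary.exists_hausdorffMeasure_level_inter_ball_le (h : HasC2Boundary Ω)
    (hN : 1 ≤ N) (hΩ : IsOpen Ω) (hb : Bornology.IsBounded Ω) (hne : (frontier Ω).Nonempty) :
    ∃ C : NNReal, ∃ η > 0, ∀ β < η, ∀ (y : EuclideanSpace ℝ (Fin N)) (r : ℝ), 0 < r →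
      μH[(N : ℝ) - 1] ({x ∈ Ω | infDist x (frontier Ω) = β} ∩ ball y r) ≤
        C * ENNReal.ofReal (r ^ (N - 1)) := by
  have hK : IsCompact (frontier Ω) := isCompact_of_isClosed_isBounded isClosed_frontier
    (hb.closure.subset frontier_subset_closure)
  suffices H : ∃ C : NNReal, ∃ η > (0 : ℝ), ∀ (β : ℝ) (y : EuclideanSpace ℝ (Fin N)) (r : ℝ),
      0 < r → μH[(N : ℝ) - 1] ({x ∈ Ω | infDist x (frontier Ω) = β ∧
        ∃ q ∈ frontier Ω, dist x q < η} ∩ ball y r) ≤ C * ENNReal.ofReal (r ^ (N - 1)) by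
    obtain ⟨C, η, hη, H⟩ := H
    refine ⟨C, η, hη, fun β hβ y r hr => (measure_mono ?_).trans (H β y r hr)⟩
    rintro x ⟨⟨hx, hxβ⟩, hxy⟩
    exact ⟨⟨hx, hxβ, (infDist_lt_iff hne).1 (hxβ ▸ hβ)⟩, hxy⟩
  refine hK.induction_on (p := fun s => ∃ C : NNReal, ∃ η > (0 : ℝ), ∀ (β : ℝ)
    (y : EuclideanSpace ℝ (Fin N)) (r : ℝ), 0 < r → μH[(N : ℝ) - 1] ({x ∈ Ω |
      infDist x (frontier Ω) = β ∧ ∃ q ∈ s, dist x q < η} ∩ ball y r) ≤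
        C * ENNReal.ofReal (r ^ (N - 1))) ?_ ?_ ?_ ?_
  · exact ⟨0, 1, one_pos, fun β y r hr => by simp⟩
  · rintro s t hst ⟨C, η, hη, H⟩
    refine ⟨C, η, hη, fun β y r hr => (measure_mono ?_).trans (H β y r hr)⟩
    rintro x ⟨⟨hx, hxβ, q, hq, hxq⟩, hxy⟩
    exact ⟨⟨hx, hxβ, q, hst hq, hxq⟩, hxy⟩
  · rintro s t ⟨C₁, η₁, hη₁, H₁⟩ ⟨C₂, η₂, hη₂, H₂⟩
    refine ⟨C₁ + C₂, min η₁ η₂, lt_min hη₁ hη₂, fun β y r hr => ?_⟩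
    rw [ENNReal.coe_add, add_mul]
    refine (measure_mono ?_).trans ((measure_union_le _ _).trans
      (add_le_add (H₁ β y r hr) (H₂ β y r hr)))
    rintro x ⟨⟨hx, hxβ, q, hq | hq, hxq⟩, hxy⟩
    · exact Or.inl ⟨⟨hx, hxβ, q, hq, hxq.trans_le (min_le_left _ _)⟩, hxy⟩
    · exact Or.inr ⟨⟨hx, hxβ, q, hq, hxq.trans_le (min_le_right _ _)⟩, hxy⟩
  · intro p hp
    obtain ⟨e, he, ρ, hρ, hcone⟩ := h.exists_interiorConeAt hp
    obtain ⟨C, hC⟩ := exists_hausdorffMeasure_inter_ball_le hN he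
    refine ⟨ball p (ρ / 8), mem_nhdsWithin_of_mem_nhds (ball_mem_nhds p (by positivity)), C,
      ρ / 8, by positivity, fun β y r hr => hC _ ?_ y r hr⟩
    have hnear : ∀ x q, q ∈ ball p (ρ / 8) → dist x q < ρ / 8 → dist x p < ρ / 4 :=
      fun x q hq hxq => by
        rw [mem_ball] at hq
        linarith [dist_triangle x q p]
    rintro x ⟨hx, hxβ, q, hq, hxq⟩ z ⟨hz, hzβ, q', hq', hzq⟩
    exact hcone.abs_inner_sub_le hΩ hp he hx hz (hnear x q hq hxq) (hnear z q' hq' hzq)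
      (hxβ.trans hzβ.symm)

/-- The level set `{δ = β}` fills a definite part of `B(y, aβ)` whenever `δ(y) < aβ/2`. -/
theorem HasC2Boundary.exists_le_hausdorffMeasure_level_inter_ball (h : HasC2Boundary Ω)
    (hN : 1 ≤ N) (hΩ : IsOpen Ω) (hb : Bornology.IsBounded Ω) (hne : (frontier Ω).Nonempty)
    {a : ℝ} (ha : 2 ≤ a) :
    ∃ c : NNReal, 0 < c ∧ ∃ η > 0, ∀ β ∈ Ioo 0 η, ∀ y ∈ Ω,
      infDist y (frontier Ω) < a * β / 2 → c * ENNReal.ofReal (β ^ (N - 1)) ≤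
        μH[(N : ℝ) - 1] ({x ∈ Ω | infDist x (frontier Ω) = β} ∩ ball y (a * β)) := by
  have hK : IsCompact (frontier Ω) := isCompact_of_isClosed_isBounded isClosed_frontier
    (hb.closure.subset frontier_subset_closure)
  suffices H : ∃ c : NNReal, 0 < c ∧ ∃ η > 0, ∀ β ∈ Ioo 0 η, ∀ y ∈ Ω,
      infDist y (frontier Ω) < a * β / 2 → (∃ q ∈ frontier Ω, dist y q < a * β / 2) →
      c * ENNReal.ofReal (β ^ (N - 1)) ≤
        μH[(N : ℝ) - 1] ({x ∈ Ω | infDist x (frontier Ω) = β} ∩ ball y (a * β)) by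
    obtain ⟨c, hc, η, hη, H⟩ := H
    exact ⟨c, hc, η, hη, fun β hβ y hy hya => H β hβ y hy hya ((infDist_lt_iff hne).1 hya)⟩
  refine hK.induction_on (p := fun s => ∃ c : NNReal, 0 < c ∧ ∃ η > 0, ∀ β ∈ Ioo 0 η, ∀ y ∈ Ω,
      infDist y (frontier Ω) < a * β / 2 → (∃ q ∈ s, dist y q < a * β / 2) →
      c * ENNReal.ofReal (β ^ (N - 1)) ≤
        μH[(N : ℝ) - 1] ({x ∈ Ω | infDist x (frontier Ω) = β} ∩ ball y (a * β))) ?_ ?_ ?_ ?_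
  · exact ⟨1, one_pos, 1, one_pos, fun β _ y _ => by simp⟩
  · rintro s t hst ⟨c, hc, η, hη, H⟩
    exact ⟨c, hc, η, hη, fun β hβ y hy hya ⟨q, hq, hyq⟩ => H β hβ y hy hya ⟨q, hst hq, hyq⟩⟩
  · rintro s t ⟨c₁, hc₁, η₁, hη₁, H₁⟩ ⟨c₂, hc₂, η₂, hη₂, H₂⟩
    refine ⟨min c₁ c₂, lt_min hc₁ hc₂, min η₁ η₂, lt_min hη₁ hη₂, ?_⟩
    rintro β ⟨hβ, hβη⟩ y hy hya ⟨q, hq | hq, hyq⟩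
    · refine le_trans ?_ (H₁ β ⟨hβ, hβη.trans_le (min_le_left _ _)⟩ y hy hya
        ⟨q, hq, hyq⟩)
      gcongr
      exact min_le_left _ _
    · refine le_trans ?_ (H₂ β ⟨hβ, hβη.trans_le (min_le_right _ _)⟩ y hy hya
        ⟨q, hq, hyq⟩)
      gcongr
      exact min_le_right _ _
  · intro p hp
    obtain ⟨e, he, ρ, hρ, hcone⟩ := h.exists_interiorConeAt hp
    obtain ⟨c, hc, hcS⟩ := exists_le_hausdorffMeasure hN he
    refine ⟨ball p (ρ / 8), mem_nhdsWithin_of_mem_nhds (ball_mem_nhds p (by positivity)),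
      c * (1 / 4) ^ (N - 1), by positivity, ρ / (16 * a), by positivity, ?_⟩
    rintro β ⟨hβ, hβρ⟩ y hy hya ⟨q, hq, hyq⟩
    rw [lt_div_iff₀ (by positivity)] at hβρ
    rw [mem_ball] at hq
    have haβ : 2 * β ≤ a * β := mul_le_mul_of_nonneg_right ha hβ.le
    have hyp : dist y p < ρ / 8 + a * β / 2 := by linarith [dist_triangle y q p]
    have hβρ' : 4 * β < ρ := by linarith
    obtain ⟨x, hx, hxβ, hxy⟩ := hcone.exists_infDist_eq hΩ hp he ha hβ hβρ' hy (by linarith)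
      hya
    have hxp : dist x p < ρ / 4 := by linarith [dist_triangle x y p]
    have := hcS ({x ∈ Ω | infDist x (frontier Ω) = β} ∩ ball y (a * β)) x (β / 4) (by positivity)
      fun z hz hze => by
        obtain ⟨t, htΩ, htβ, ht⟩ := hcone.exists_add_infDist_eq hΩ hp he hx hxβ hβρ' hxp hz hze
        refine ⟨t, ⟨htΩ, htβ⟩, ?_⟩
        have : dist (x + (z + t • e)) y ≤ ‖z + t • e‖ + dist x y := by
          simpa [dist_eq_norm] using dist_triangle (x + (z + t • e)) x y
        rw [mem_ball]
        linarith
    refine le_trans (le_of_eq ?_) this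
    have hquarter : (((1 / 4 : NNReal) ^ (N - 1) : NNReal) : ENNReal) =
        ENNReal.ofReal ((1 / 4) ^ (N - 1)) := by
      rw [← ENNReal.ofReal_coe_nnreal]
      push_cast
      rfl
    rw [ENNReal.coe_mul, hquarter, mul_assoc, ← ENNReal.ofReal_mul (by positivity), ← mul_pow,
      one_div_mul_eq_div]

end Measure

theorem sFinite_restrict_of_lintegral_lt_top {X : Type*} [MeasurableSpace X] {τ : Measure X}
    {Ω : Set X} (hΩ : MeasurableSet Ω) {Φ : X → ℝ} (hΦ : Measurable Φ) (hpos : ∀ x ∈ Ω, 0 < Φ x)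
    (hfin : ∫⁻ x in Ω, ENNReal.ofReal (Φ x) ∂τ < ⊤) : SFinite (τ.restrict Ω) := by
  have := isFiniteMeasure_withDensity hfin.ne
  rw [← withDensity_inv_same (μ := τ.restrict Ω) hΦ.ennreal_ofReal ?_ ?_]
  · infer_instance
  · filter_upwards [ae_restrict_mem hΩ] with x hx
    exact (ENNReal.ofReal_pos.2 (hpos x hx)).ne'
  · exact ae_of_all _ fun x => ENNReal.ofReal_ne_top

/-- Tonelli for a kernel truncated to `|x-y| < R`. -/
theorem lintegral_mul_setLIntegral_swap {X : Type*} [MetricSpace X] [SecondCountableTopology X]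
    [MeasurableSpace X] [BorelSpace X] {μ τ : Measure X} {Ω : Set X} [SFinite μ]
    [SFinite (τ.restrict Ω)] {Φ : X → ℝ} {G : X → X → ℝ} (hΦ : Measurable Φ)
    (hG : Measurable (Function.uncurry G)) {R : ℝ} :
    ∫⁻ x, ENNReal.ofReal (Φ x) * ∫⁻ y in {y ∈ Ω | dist x y < R}, ENNReal.ofReal (G x y) ∂τ ∂μ =
      ∫⁻ y in Ω, ∫⁻ x in ball y R, ENNReal.ofReal (Φ x) * ENNReal.ofReal (G x y) ∂μ ∂τ := by
  set F : X × X → ENNReal := {q : X × X | dist q.1 q.2 < R}.indicator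
    (fun q => ENNReal.ofReal (Φ q.1) * ENNReal.ofReal (G q.1 q.2)) with hF
  have hFm : Measurable F := by
    refine Measurable.indicator ?_ (measurableSet_lt measurable_dist measurable_const)
    exact (hΦ.comp measurable_fst).ennreal_ofReal.mul hG.ennreal_ofReal
  calc _ = ∫⁻ x, ∫⁻ y in Ω, F (x, y) ∂τ ∂μ := by
        refine lintegral_congr fun x => ?_
        have hm : MeasurableSet {y | dist x y < R} :=
          measurableSet_lt (measurable_const.dist measurable_id) measurable_const
        rw [show {y ∈ Ω | dist x y < R} = {y | dist x y < R} ∩ Ω from inter_comm _ _,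
          ← Measure.restrict_restrict hm, ← lintegral_const_mul' _ _ ENNReal.ofReal_ne_top,
          ← lintegral_indicator hm]
        rfl
    _ = ∫⁻ y in Ω, ∫⁻ x, F (x, y) ∂μ ∂τ := lintegral_lintegral_swap hFm.aemeasurable
    _ = _ := by
        refine lintegral_congr fun y => ?_
        rw [← lintegral_indicator measurableSet_ball]
        rfl

theorem stmt8 {N : ℕ} (hN : 3 ≤ N) (Ω : Set (EuclideanSpace ℝ (Fin N)))
    (hΩo : IsOpen Ω) (hΩb : Bornology.IsBounded Ω) (hΩ2 : HasC2Boundary Ω)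
    (a : ℝ) (ha : 2 ≤ a)
    (Φ : EuclideanSpace ℝ (Fin N) → ℝ)
    (G : EuclideanSpace ℝ (Fin N) → EuclideanSpace ℝ (Fin N) → ℝ)
    (hΦm : Measurable Φ) (hΦpos : ∀ x ∈ Ω, 0 < Φ x)
    (hGm : Measurable (Function.uncurry G))
    (hGpos : ∀ x ∈ Ω, ∀ y ∈ Ω, x ≠ y → 0 < G x y)
    (c₀ β₁ : ℝ) (hc₀ : 1 ≤ c₀) (hβ₁ : 0 < β₁)
    -- two-sided estimate of `Φ(x) G(x,y)` for `x ∈ Σ_β`, `0 < |x-y| < aβ`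
    (hG : ∀ β ∈ Set.Ioo (0:ℝ) β₁, ∀ x ∈ Ω, Metric.infDist x (frontier Ω) = β →
      ∀ y ∈ Ω, 0 < dist x y → dist x y < a * β →
        c₀⁻¹ * dist x y ^ ((2:ℝ) - N) * Φ y ≤ Φ x * G x y ∧
        Φ x * G x y ≤ c₀ * dist x y ^ ((2:ℝ) - N) * Φ y) :
    ∃ c : ℝ, 1 ≤ c ∧ ∃ β₂ : ℝ, 0 < β₂ ∧ β₂ ≤ β₁ ∧
      ∀ τ : Measure (EuclideanSpace ℝ (Fin N)), τ Ωᶜ = 0 →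
        (∫⁻ x in Ω, ENNReal.ofReal (Φ x) ∂τ) < ⊤ →
        ∀ β ∈ Set.Ioo (0:ℝ) β₂,
          ENNReal.ofReal c⁻¹ *
              (∫⁻ y in {y ∈ Ω | Metric.infDist y (frontier Ω) < a * β / 2},
                ENNReal.ofReal (Φ y) ∂τ) ≤
            ENNReal.ofReal β⁻¹ *
              (∫⁻ x in {x ∈ Ω | Metric.infDist x (frontier Ω) = β},
                ENNReal.ofReal (Φ x) *
                  (∫⁻ y in {y ∈ Ω | dist x y < a * β},
                    ENNReal.ofReal (G x y) ∂τ) ∂(μH[(N:ℝ) - 1])) ∧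
          ENNReal.ofReal β⁻¹ *
              (∫⁻ x in {x ∈ Ω | Metric.infDist x (frontier Ω) = β},
                ENNReal.ofReal (Φ x) *
                  (∫⁻ y in {y ∈ Ω | dist x y < a * β},
                    ENNReal.ofReal (G x y) ∂τ) ∂(μH[(N:ℝ) - 1])) ≤
            ENNReal.ofReal c * (∫⁻ y in Ω, ENNReal.ofReal (Φ y) ∂τ) := by
  rcases Ω.eq_empty_or_nonempty with rfl | hΩne
  · exact ⟨1, le_rfl, β₁, hβ₁, le_rfl, fun τ _ _ β _ => by simp⟩
  have hN3 : (3 : ℝ) ≤ N := by exact_mod_cast hN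
  have : Nontrivial (EuclideanSpace ℝ (Fin N)) := by
    have : Nonempty (Fin N) := ⟨⟨0, by omega⟩⟩
    infer_instance
  have hne : (frontier Ω).Nonempty := by
    refine nonempty_frontier_iff.2 ⟨hΩne, ?_⟩
    rintro rfl
    exact NormedSpace.unbounded_univ ℝ _ hΩb
  obtain ⟨C, η, hη, hC⟩ :=
    hΩ2.exists_hausdorffMeasure_level_inter_ball_le (by omega) hΩo hΩb hne
  obtain ⟨m, hm, η', hη', hM⟩ :=
    hΩ2.exists_le_hausdorffMeasure_level_inter_ball (by omega) hΩo hΩb hne ha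
  have ha0 : 0 < a := by linarith
  have hc₀0 : 0 < c₀ := by linarith
  set u : ℝ := c₀ * C * 4 ^ (N - 1) * a with hu
  set l : ℝ := c₀⁻¹ * a ^ ((2 : ℝ) - N) * m with hl
  have hlpos : 0 < l := by positivity
  refine ⟨max (max 1 u) l⁻¹, le_max_of_le_left (le_max_left _ _), min β₁ (min η η'),
    by positivity, min_le_left _ _, ?_⟩
  rintro τ - hΦτ β ⟨hβ, hββ⟩
  simp only [lt_min_iff] at hββ
  obtain ⟨hββ₁, hβη, hβη'⟩ := hββ
  set S := {x ∈ Ω | infDist x (frontier Ω) = β} with hS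
  have hSm : MeasurableSet S := hΩo.measurableSet.inter
    (measurableSet_eq_fun (continuous_infDist_pt _).measurable measurable_const)
  set R := a * β with hR
  have hRpos : 0 < R := by positivity
  have : IsFiniteMeasure (μH[(N : ℝ) - 1].restrict S) := by
    obtain ⟨r, hr⟩ := hΩb.subset_ball 0
    have hsub : S ⊆ S ∩ ball 0 (max r 1) := fun x hx =>
      ⟨hx, ball_subset_ball (le_max_left _ _) (hr hx.1)⟩
    refine ⟨?_⟩
    rw [Measure.restrict_apply_univ]
    refine ((measure_mono hsub).trans (hC β hβη 0 _ (by positivity))).trans_lt ?_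
    exact ENNReal.mul_lt_top ENNReal.coe_lt_top ENNReal.ofReal_lt_top
  have hτ := sFinite_restrict_of_lintegral_lt_top hΩo.measurableSet hΦm hΦpos hΦτ
  rw [lintegral_mul_setLIntegral_swap hΦm hGm]
  have hae : ∀ y, ∀ᵐ x ∂(μH[(N : ℝ) - 1].restrict S).restrict (ball y R),
      x ∈ S ∧ x ≠ y ∧ dist x y < R := by
    intro y
    have := Measure.nullSingletonClass_hausdorff (EuclideanSpace ℝ (Fin N))
      (d := (N : ℝ) - 1) (by linarith)
    filter_upwards [ae_restrict_mem measurableSet_ball, ae_restrict_of_ae (ae_restrict_mem hSm),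
      ae_restrict_of_ae (ae_restrict_of_ae (Measure.ae_ne _ y))] with x h1 h2 h3
    exact ⟨h2, h3, h1⟩
  have hprod : ∀ y, ∀ x ∈ S, ENNReal.ofReal (Φ x) * ENNReal.ofReal (G x y) =
      ENNReal.ofReal (Φ x * G x y) := fun y x hx =>
    (ENNReal.ofReal_mul (hΦpos x hx.1).le).symm
  constructor
  · have hpt : ∀ y ∈ {y ∈ Ω | infDist y (frontier Ω) < a * β / 2},
        ENNReal.ofReal (β * l) * ENNReal.ofReal (Φ y) ≤ ∫⁻ x in ball y R,
          ENNReal.ofReal (Φ x) * ENNReal.ofReal (G x y) ∂(μH[(N : ℝ) - 1].restrict S) := by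
      rintro y ⟨hy, hya⟩
      have hbl : β * l = c₀⁻¹ * R ^ ((2 : ℝ) - N) * m * β ^ (N - 1) := by
        have hpow : β ^ ((2 : ℝ) - N) * β ^ (N - 1) = β := by
          rw [← Real.rpow_natCast, ← Real.rpow_add hβ, Nat.cast_sub (by omega)]
          convert Real.rpow_one β using 2
          push_cast; ring
        rw [hR, Real.mul_rpow ha0.le hβ.le, hl]
        linear_combination -(c₀⁻¹ * a ^ ((2 : ℝ) - N) * m) * hpow
      calc ENNReal.ofReal (β * l) * ENNReal.ofReal (Φ y)
          = ENNReal.ofReal (c₀⁻¹ * R ^ ((2 : ℝ) - N) * Φ y) *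
            (m * ENNReal.ofReal (β ^ (N - 1))) := by
            rw [← ENNReal.ofReal_coe_nnreal, ← ENNReal.ofReal_mul m.coe_nonneg,
              ← ENNReal.ofReal_mul (by positivity),
              ← ENNReal.ofReal_mul (by have := hΦpos y hy; positivity), hbl]
            congr 1
            ring
        _ ≤ ENNReal.ofReal (c₀⁻¹ * R ^ ((2 : ℝ) - N) * Φ y) *
            μH[(N : ℝ) - 1].restrict S (ball y R) := by
            gcongr
            rw [Measure.restrict_apply measurableSet_ball, inter_comm]
            exact hM β ⟨hβ, hβη'⟩ y hy hya
        _ = ∫⁻ x in ball y R, ENNReal.ofReal (c₀⁻¹ * R ^ ((2 : ℝ) - N) * Φ y)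
              ∂(μH[(N : ℝ) - 1].restrict S) := by rw [setLIntegral_const]
        _ ≤ _ := by
            refine lintegral_mono_ae ?_
            filter_upwards [hae y] with x ⟨hxS, hxy, hxR⟩
            rw [hprod y x hxS]
            refine ENNReal.ofReal_le_ofReal (le_trans ?_
              (hG β ⟨hβ, hββ₁⟩ x hxS.1 hxS.2 y hy (dist_pos.2 hxy) hxR).1)
            have := hΦpos y hy
            have := Real.rpow_le_rpow_of_nonpos (dist_pos.2 hxy) hxR.le
              (show (2 : ℝ) - N ≤ 0 by linarith)
            gcongr
    calc _ ≤ ENNReal.ofReal l * ∫⁻ y in {y ∈ Ω | infDist y (frontier Ω) < a * β / 2},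
          ENNReal.ofReal (Φ y) ∂τ := by
          gcongr
          exact inv_le_of_inv_le₀ hlpos (le_max_right _ _)
      _ = ENNReal.ofReal β⁻¹ * ∫⁻ y in {y ∈ Ω | infDist y (frontier Ω) < a * β / 2},
          ENNReal.ofReal (β * l) * ENNReal.ofReal (Φ y) ∂τ := by
          rw [lintegral_const_mul _ hΦm.ennreal_ofReal, ← mul_assoc,
            ← ENNReal.ofReal_mul (by positivity), inv_mul_cancel_left₀ hβ.ne']
      _ ≤ _ := by
          refine mul_le_mul_right ((setLIntegral_mono' ?_ hpt).trans
            (lintegral_mono_set fun y hy => hy.1)) _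
          exact hΩo.measurableSet.inter
            (measurableSet_lt (continuous_infDist_pt _).measurable measurable_const)
  · have hpt : ∀ y ∈ Ω, ∫⁻ x in ball y R,
          ENNReal.ofReal (Φ x) * ENNReal.ofReal (G x y) ∂(μH[(N : ℝ) - 1].restrict S) ≤
        ENNReal.ofReal (β * u) * ENNReal.ofReal (Φ y) := by
      intro y hy
      calc _ ≤ ∫⁻ x in ball y R, ENNReal.ofReal (c₀ * Φ y) *
              ENNReal.ofReal (dist x y ^ ((2 : ℝ) - N)) ∂(μH[(N : ℝ) - 1].restrict S) := by
            refine lintegral_mono_ae ?_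
            filter_upwards [hae y] with x ⟨hxS, hxy, hxR⟩
            rw [hprod y x hxS, ← ENNReal.ofReal_mul (by have := hΦpos y hy; positivity)]
            refine ENNReal.ofReal_le_ofReal
              ((hG β ⟨hβ, hββ₁⟩ x hxS.1 hxS.2 y hy (dist_pos.2 hxy) hxR).2.trans (le_of_eq ?_))
            ring
        _ ≤ ENNReal.ofReal (c₀ * Φ y) * (C * ENNReal.ofReal (4 ^ (N - 1) * R)) := by
            rw [lintegral_const_mul' _ _ ENNReal.ofReal_ne_top]
            gcongr
            refine lintegral_ball_dist_rpow_le hN (fun r hr => ?_) hRpos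
            rw [Measure.restrict_apply measurableSet_ball, inter_comm]
            exact hC β hβη y r hr
        _ = _ := by
            rw [← ENNReal.ofReal_coe_nnreal, ← ENNReal.ofReal_mul C.coe_nonneg,
              ← ENNReal.ofReal_mul (by have := hΦpos y hy; positivity),
              ← ENNReal.ofReal_mul (by positivity), hu, hR]
            congr 1
            ring
    calc _ ≤ ENNReal.ofReal β⁻¹ *
          ∫⁻ y in Ω, ENNReal.ofReal (β * u) * ENNReal.ofReal (Φ y) ∂τ := by
          exact mul_le_mul_right (setLIntegral_mono' hΩo.measurableSet hpt) _
      _ = ENNReal.ofReal u * ∫⁻ y in Ω, ENNReal.ofReal (Φ y) ∂τ := by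
          rw [lintegral_const_mul _ hΦm.ennreal_ofReal, ← mul_assoc,
            ← ENNReal.ofReal_mul (by positivity), inv_mul_cancel_left₀ hβ.ne']
      _ ≤ _ := by
          gcongr
          exact le_max_of_le_left (le_max_right _ _)
end

section
/- Let Ω ⊂ ℝ^N (N ≥ 3) be a bounded open set, δ(x) := dist(x, ∂Ω), Φ : Ω → (0,∞) continuous, and G : {(x,y) ∈ Ω × Ω : x ≠ y} → (0,∞) Borel measurable and symmetric, such that: (a) for every compact E ⊂ Ω there is c(E) ≥ 1 with c(E)⁻¹ |x−y|^{2−N} ≤ G(x,y) ≤ c(E) |x−y|^{2−N} for all distinct x, y ∈ E; (b) for every y₀ ∈ Ω there is C(y₀) ≥ 1 with C(y₀)⁻¹ G(x,y₀) ≤ Φ(x) ≤ C(y₀) G(x,y₀) whenever δ(x) < δ(y₀)/2. Let τ be a positive Borel measure on Ω that is finite on compact subsets of Ω. Then: if ∫_Ω Φ dτ = ∞, then ∫_Ω G(x,y) dτ(y) = ∞ for every x ∈ Ω; and if ∫_Ω Φ dτ < ∞, then ∫_Ω G(x,y) dτ(y) < ∞ for Lebesgue-almost every x ∈ Ω. In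 particular, G[τ] := ∫_Ω G(·,y) dτ(y) is finite almost everywhere if and only if ∫_Ω Φ dτ < ∞. -/
open MeasureTheory Metric Set

/-- The part of a bounded set at distance at least `r > 0` from its frontier is compact. -/
lemma isCompact_inter_le_infDist_frontier {X : Type*} [PseudoMetricSpace X] [ProperSpace X]
    {Ω : Set X} (hΩo : IsOpen Ω) (hΩb : Bornology.IsBounded Ω) {r : ℝ} (hr : 0 < r) :
    IsCompact {y ∈ Ω | r ≤ infDist y (frontier Ω)} := by
  have h : {y ∈ Ω | r ≤ infDist y (frontier Ω)}
      = closure Ω ∩ {y | r ≤ infDist y (frontier Ω)} := by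
    ext y
    refine ⟨fun h => ⟨subset_closure h.1, h.2⟩, fun h => ⟨?_, h.2⟩⟩
    by_contra hy
    have hf : y ∈ frontier Ω := by rw [hΩo.frontier_eq]; exact ⟨h.1, hy⟩
    have h2 : r ≤ infDist y (frontier Ω) := h.2
    rw [infDist_zero_of_mem hf] at h2
    exact absurd hr h2.not_gt
  rw [h]
  exact hΩb.isCompact_closure.inter_right
    (isClosed_le continuous_const (continuous_infDist_pt _))

/-- Points of a nonempty bounded open subset of a connected noncompact proper space are at positive
distance from the frontier. -/
lemma infDist_frontier_pos_s10 {X : Type*} [MetricSpace X] [ProperSpace X] [PreconnectedSpace X]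
    [NoncompactSpace X] {Ω : Set X} (hΩo : IsOpen Ω) (hΩb : Bornology.IsBounded Ω) {x : X}
    (hx : x ∈ Ω) : 0 < infDist x (frontier Ω) := by
  have hne : (frontier Ω).Nonempty := by
    rw [nonempty_iff_ne_empty]
    intro h
    rcases isClopen_iff.1 (isClopen_iff_frontier_eq_empty.2 h) with h | h
    · simp [h] at hx
    · exact noncompact_univ X (h ▸ isCompact_of_isClosed_isBounded
        (isClopen_iff_frontier_eq_empty.2 ‹_›).isClosed hΩb)
  rw [← isClosed_frontier.notMem_iff_infDist_pos hne, hΩo.frontier_eq]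
  exact fun h => h.2 hx

/-- The Newtonian kernel is integrable near the origin. -/
lemma lintegral_indicator_norm_rpow_lt_top {N : ℕ} (hN : 0 < N) (R : ℝ) :
    ∫⁻ z : EuclideanSpace ℝ (Fin N),
      ENNReal.ofReal ((Iio R).indicator (fun t : ℝ => t ^ ((2:ℝ) - N)) ‖z‖) < ⊤ := by
  have : Nonempty (Fin N) := ⟨⟨0, hN⟩⟩
  have hint : Integrable (fun z : EuclideanSpace ℝ (Fin N) =>
      (Iio R).indicator (fun t : ℝ => t ^ ((2:ℝ) - N)) ‖z‖) := by
    rw [integrable_fun_norm_addHaar volume]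
    have h1 : IntegrableOn (fun t : ℝ => (Iio R).indicator (fun t : ℝ => t) t) (Ioi 0) := by
      rw [IntegrableOn, integrable_indicator_iff measurableSet_Iio, IntegrableOn,
        Measure.restrict_restrict measurableSet_Iio]
      exact (continuous_id.integrableOn_Icc (a := 0) (b := R)).mono_set
        fun t ht => ⟨le_of_lt ht.2, le_of_lt ht.1⟩
    refine h1.congr_fun (fun t ht => ?_) measurableSet_Ioi
    have ht : 0 < t := ht
    by_cases hR : t ∈ Iio R
    · simp only [indicator_of_mem hR, finrank_euclideanSpace, Fintype.card_fin, smul_eq_mul]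
      rw [← Real.rpow_natCast, ← Real.rpow_add ht, Nat.cast_sub hN]
      norm_num
    · simp [indicator_of_notMem hR]
  exact hint.lintegral_lt_top

/-- The Newtonian potential of a measure on a compact set is finite almost everywhere on it. -/
lemma ae_lintegral_dist_rpow_lt_top {N : ℕ} (hN : 0 < N) {K : Set (EuclideanSpace ℝ (Fin N))}
    (hK : IsCompact K) (τ : Measure (EuclideanSpace ℝ (Fin N))) (hτ : τ K < ⊤) :
    ∀ᵐ x ∂(volume.restrict K),
      ∫⁻ y in K, ENNReal.ofReal (dist x y ^ ((2:ℝ) - N)) ∂τ < ⊤ := by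
  have : IsFiniteMeasure (τ.restrict K) := isFiniteMeasure_restrict.2 hτ.ne
  have hm : Measurable (Function.uncurry fun x y : EuclideanSpace ℝ (Fin N) =>
      ENNReal.ofReal (dist x y ^ ((2:ℝ) - N))) := by
    unfold Function.uncurry
    fun_prop
  refine ae_lt_top hm.lintegral_prod_right' (ne_of_lt ?_)
  obtain ⟨R, hR⟩ := isBounded_iff.1 hK.isBounded
  let I := ∫⁻ z : EuclideanSpace ℝ (Fin N),
      ENNReal.ofReal ((Iio (R + 1)).indicator (fun t : ℝ => t ^ ((2:ℝ) - N)) ‖z‖)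
  have hI : I < ⊤ := lintegral_indicator_norm_rpow_lt_top hN (R + 1)
  have hbound : ∀ y ∈ K, ∫⁻ x in K, ENNReal.ofReal (dist x y ^ ((2:ℝ) - N)) ≤ I := by
    intro y hy
    calc ∫⁻ x in K, ENNReal.ofReal (dist x y ^ ((2:ℝ) - N))
        ≤ ∫⁻ x in K, ENNReal.ofReal
            ((Iio (R + 1)).indicator (fun t : ℝ => t ^ ((2:ℝ) - N)) ‖x - y‖) := by
          refine setLIntegral_mono' hK.measurableSet fun x hx => ?_
          have hxy : ‖x - y‖ ∈ Iio (R + 1) := by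
            have := hR hx hy
            rw [dist_eq_norm] at this
            exact this.trans_lt (lt_add_one R)
          rw [indicator_of_mem hxy, dist_eq_norm]
      _ ≤ _ := setLIntegral_le_lintegral _ _
      _ = I := lintegral_sub_right_eq_self (fun z : EuclideanSpace ℝ (Fin N) => ENNReal.ofReal
          ((Iio (R + 1)).indicator (fun t : ℝ => t ^ ((2:ℝ) - N)) ‖z‖)) y
  calc ∫⁻ x in K, ∫⁻ y in K, ENNReal.ofReal (dist x y ^ ((2:ℝ) - N)) ∂τ
      = ∫⁻ y in K, ∫⁻ x in K, ENNReal.ofReal (dist x y ^ ((2:ℝ) - N)) ∂volume ∂τ :=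
        lintegral_lintegral_swap hm.aemeasurable
    _ ≤ ∫⁻ _ in K, I ∂τ := setLIntegral_mono' hK.measurableSet hbound
    _ = I * τ K := setLIntegral_const _ _
    _ < ⊤ := ENNReal.mul_lt_top hI hτ

theorem stmt10 {N : ℕ} (hN : 3 ≤ N) (Ω : Set (EuclideanSpace ℝ (Fin N)))
    (hΩo : IsOpen Ω) (hΩb : Bornology.IsBounded Ω)
    (Φ : EuclideanSpace ℝ (Fin N) → ℝ)
    (G : EuclideanSpace ℝ (Fin N) → EuclideanSpace ℝ (Fin N) → ℝ)
    (hΦc : ContinuousOn Φ Ω) (hΦpos : ∀ x ∈ Ω, 0 < Φ x)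
    (hGm : Measurable (Function.uncurry G))
    (hGpos : ∀ x ∈ Ω, ∀ y ∈ Ω, x ≠ y → 0 < G x y)
    (hGsym : ∀ x ∈ Ω, ∀ y ∈ Ω, G x y = G y x)
    -- (a): interior two-sided Green estimate on compact subsets of `Ω`
    (hGa : ∀ E : Set (EuclideanSpace ℝ (Fin N)), E ⊆ Ω → IsCompact E →
      ∃ cE : ℝ, 1 ≤ cE ∧ ∀ x ∈ E, ∀ y ∈ E, x ≠ y →
        cE⁻¹ * dist x y ^ ((2:ℝ) - N) ≤ G x y ∧ G x y ≤ cE * dist x y ^ ((2:ℝ) - N))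
    -- (b): comparison of the Green kernel with the ground state near the boundary
    (hGb : ∀ y₀ ∈ Ω, ∃ Cy : ℝ, 1 ≤ Cy ∧ ∀ x ∈ Ω,
      Metric.infDist x (frontier Ω) < Metric.infDist y₀ (frontier Ω) / 2 →
      Cy⁻¹ * G x y₀ ≤ Φ x ∧ Φ x ≤ Cy * G x y₀)
    (τ : Measure (EuclideanSpace ℝ (Fin N))) (hτ : τ Ωᶜ = 0)
    (hτloc : ∀ E : Set (EuclideanSpace ℝ (Fin N)), E ⊆ Ω → IsCompact E → τ E < ⊤) :
    ((∫⁻ x in Ω, ENNReal.ofReal (Φ x) ∂τ) = ⊤ →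
      ∀ x ∈ Ω, (∫⁻ y in Ω, ENNReal.ofReal (G x y) ∂τ) = ⊤) ∧
    ((∫⁻ x in Ω, ENNReal.ofReal (Φ x) ∂τ) < ⊤ →
      ∀ᵐ x ∂(volume.restrict Ω), (∫⁻ y in Ω, ENNReal.ofReal (G x y) ∂τ) < ⊤) := by
  have : Nontrivial (EuclideanSpace ℝ (Fin N)) := by
    have : Nonempty (Fin N) := ⟨⟨0, by omega⟩⟩
    infer_instance
  have : NoncompactSpace (EuclideanSpace ℝ (Fin N)) :=
    NormedSpace.noncompactSpace ℝ (EuclideanSpace ℝ (Fin N))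
  let K : ℝ → Set (EuclideanSpace ℝ (Fin N)) := fun r => {y ∈ Ω | r ≤ infDist y (frontier Ω)}
  have hKΩ : ∀ r, K r ⊆ Ω := fun r y hy => hy.1
  have hK : ∀ {r : ℝ}, 0 < r → IsCompact (K r) :=
    fun hr => isCompact_inter_le_infDist_frontier hΩo hΩb hr
  have hdiff : ∀ {r : ℝ}, ∀ y ∈ Ω \ K r, y ∈ Ω ∧ infDist y (frontier Ω) < r :=
    fun y hy => ⟨hy.1, not_le.1 fun h => hy.2 ⟨hy.1, h⟩⟩
  have hmeas : ∀ {r : ℝ}, 0 < r → MeasurableSet (Ω \ K r) :=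
    fun hr => hΩo.measurableSet.diff (hK hr).measurableSet
  have hsplit : ∀ {r : ℝ}, 0 < r → ∀ f : EuclideanSpace ℝ (Fin N) → ENNReal,
      ∫⁻ y in Ω, f y ∂τ ≤ ∫⁻ y in K r, f y ∂τ + ∫⁻ y in Ω \ K r, f y ∂τ := by
    intro r hr f
    conv_lhs => rw [← union_sdiff_cancel (hKΩ r)]
    exact lintegral_union_le _ _ _
  constructor
  · intro hΦ x hx
    have hr := half_pos (infDist_frontier_pos_s10 hΩo hΩb hx)
    set r := infDist x (frontier Ω) / 2
    obtain ⟨C, hC1, hC⟩ := hGb x hx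
    have hin : ∫⁻ y in K r, ENNReal.ofReal (Φ y) ∂τ < ⊤ := by
      obtain ⟨M, hM⟩ := ((hK hr).image_of_continuousOn (hΦc.mono (hKΩ r))).bddAbove
      calc ∫⁻ y in K r, ENNReal.ofReal (Φ y) ∂τ
          ≤ ∫⁻ _ in K r, ENNReal.ofReal M ∂τ :=
            setLIntegral_mono' (hK hr).measurableSet fun y hy =>
              ENNReal.ofReal_le_ofReal (hM (mem_image_of_mem Φ hy))
        _ = ENNReal.ofReal M * τ (K r) := setLIntegral_const _ _
        _ < ⊤ := ENNReal.mul_lt_top ENNReal.ofReal_lt_top (hτloc _ (hKΩ r) (hK hr))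
    have hout : ∫⁻ y in Ω \ K r, ENNReal.ofReal (Φ y) ∂τ
        ≤ ENNReal.ofReal C * ∫⁻ y in Ω, ENNReal.ofReal (G x y) ∂τ := by
      calc ∫⁻ y in Ω \ K r, ENNReal.ofReal (Φ y) ∂τ
          ≤ ∫⁻ y in Ω \ K r, ENNReal.ofReal C * ENNReal.ofReal (G x y) ∂τ := by
            refine setLIntegral_mono' (hmeas hr) fun y hy => ?_
            obtain ⟨hyΩ, hyr⟩ := hdiff y hy
            have h := (hC y hyΩ hyr).2
            rw [hGsym y hyΩ x hx] at h
            rw [← ENNReal.ofReal_mul (by linarith)]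
            exact ENNReal.ofReal_le_ofReal h
        _ = ENNReal.ofReal C * ∫⁻ y in Ω \ K r, ENNReal.ofReal (G x y) ∂τ :=
            lintegral_const_mul' _ _ ENNReal.ofReal_ne_top
        _ ≤ _ := by gcongr; exact sdiff_subset
    by_contra hG
    refine absurd hΦ (ne_of_lt ((hsplit hr _).trans_lt (ENNReal.add_lt_top.2 ⟨hin, ?_⟩)))
    exact hout.trans_lt (ENNReal.mul_lt_top ENNReal.ofReal_lt_top (lt_top_iff_ne_top.2 hG))
  · intro hΦ
    have hpot : ∀ᵐ x ∂(volume.restrict Ω), ∀ n : ℕ, x ∈ K (1 / ((n : ℝ) + 1)) →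
        ∫⁻ y in K (1 / ((n : ℝ) + 1)), ENNReal.ofReal (dist x y ^ ((2:ℝ) - N)) ∂τ < ⊤ := by
      refine ae_all_iff.2 fun n => ae_restrict_of_ae ?_
      have hc := hK (Nat.one_div_pos_of_nat (α := ℝ) (n := n))
      exact (ae_restrict_iff' hc.measurableSet).1
        (ae_lintegral_dist_rpow_lt_top (by omega) hc τ (hτloc _ (hKΩ _) hc))
    filter_upwards [hpot, ae_restrict_mem hΩo.measurableSet] with x hpx hx
    have hδ := infDist_frontier_pos_s10 hΩo hΩb hx
    obtain ⟨n, hn⟩ := exists_nat_one_div_lt (half_pos hδ)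
    have hr : 0 < 1 / ((n : ℝ) + 1) := Nat.one_div_pos_of_nat
    specialize hpx n
    set r := 1 / ((n : ℝ) + 1)
    have hxK : x ∈ K r := ⟨hx, by linarith⟩
    obtain ⟨C, hC1, hC⟩ := hGb x hx
    obtain ⟨c, hc1, hc⟩ := hGa (K r) (hKΩ r) (hK hr)
    refine (hsplit hr _).trans_lt (ENNReal.add_lt_top.2 ⟨?_, ?_⟩)
    · calc ∫⁻ y in K r, ENNReal.ofReal (G x y) ∂τ
          ≤ ∫⁻ y in K r, (ENNReal.ofReal c * ENNReal.ofReal (dist x y ^ ((2:ℝ) - N))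
              + ({x} : Set _).indicator (fun _ => ENNReal.ofReal (G x x)) y) ∂τ := by
            refine setLIntegral_mono' (hK hr).measurableSet fun y hy => ?_
            by_cases hxy : x = y
            · subst hxy
              simp
            · rw [← ENNReal.ofReal_mul (by linarith)]
              exact (ENNReal.ofReal_le_ofReal (hc x hxK y hy hxy).2).trans le_self_add
        _ = ENNReal.ofReal c * ∫⁻ y in K r, ENNReal.ofReal (dist x y ^ ((2:ℝ) - N)) ∂τ
              + ENNReal.ofReal (G x x) * τ.restrict (K r) {x} := by
            rw [lintegral_add_left (by fun_prop), lintegral_const_mul' _ _ ENNReal.ofReal_ne_top,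
              lintegral_indicator_const (measurableSet_singleton x)]
        _ < ⊤ := ENNReal.add_lt_top.2
            ⟨ENNReal.mul_lt_top ENNReal.ofReal_lt_top (hpx hxK),
              ENNReal.mul_lt_top ENNReal.ofReal_lt_top
                ((Measure.restrict_apply_le _ _).trans_lt
                  (hτloc {x} (singleton_subset_iff.2 hx) isCompact_singleton))⟩
    · calc ∫⁻ y in Ω \ K r, ENNReal.ofReal (G x y) ∂τ
          ≤ ∫⁻ y in Ω \ K r, ENNReal.ofReal C * ENNReal.ofReal (Φ y) ∂τ := by
            refine setLIntegral_mono' (hmeas hr) fun y hy => ?_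
            obtain ⟨hyΩ, hyr⟩ := hdiff y hy
            have h := (hC y hyΩ (hyr.trans hn)).1
            rw [hGsym y hyΩ x hx, inv_mul_le_iff₀ (by linarith)] at h
            rw [← ENNReal.ofReal_mul (by linarith)]
            exact ENNReal.ofReal_le_ofReal h
        _ = ENNReal.ofReal C * ∫⁻ y in Ω \ K r, ENNReal.ofReal (Φ y) ∂τ :=
            lintegral_const_mul' _ _ ENNReal.ofReal_ne_top
        _ ≤ ENNReal.ofReal C * ∫⁻ y in Ω, ENNReal.ofReal (Φ y) ∂τ := by
            gcongr; exact sdiff_subset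
        _ < ⊤ := ENNReal.mul_lt_top ENNReal.ofReal_lt_top hΦ
end
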